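/- There is an absolute constant K such that for every prime p ≥ 5 and every real X with p³ ≤ X, the number of pairs (A,B) ∈ E(X) with p ∣ 4A³+27B² and p ∤ A (i.e. the elliptic curves y² = x³+Ax+B in the family with multiplicative reduction at p) differs from ((p−1)/p²)·(p^{10}/(p^{10}−1))·(4/ζ(10))·X^{5/6} by at most K·X^{1/2}, where ζ is the Riemann zeta function. -/

import Mathlib

/-- Condition (M): for every prime `q`, `q⁴ ∣ A` implies `q⁶ ∤ B`. -/
def CondM (A B : ℤ) : Prop := ∀ q : ℕ, q.Prime → (q : ℤ) ^ 4 ∣ A → ¬ (q : ℤ) ^ 6 ∣ B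

/-- The family `E(X)`: pairs `(A,B)` with `4A³+27B² ≠ 0`, naive height at most `X`,
satisfying condition (M). -/
def Efam (X : ℝ) : Set (ℤ × ℤ) :=
  {AB | 4 * AB.1 ^ 3 + 27 * AB.2 ^ 2 ≠ 0 ∧ ((max (|AB.1| ^ 3) (AB.2 ^ 2) : ℤ) : ℝ) ≤ X ∧
        CondM AB.1 AB.2}

/-!
Put `X = x⁶`, so that the pairs of height at most `X` are the integer points of the box
`|A| ≤ x²`, `|B| ≤ x³`. For `p ≥ 5`, multiplicative reduction at `p` means that `(A, B)` reduces to
a point `(-3t², 2t³)`, `t ≠ 0`, of the discriminant curve; there are `p - 1` such points, at most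
two above each `A`. Counting the box one residue class at a time gives `4 (p - 1) / p² · x⁵` with an
error `O(x³)` that is uniform in `p`: each class costs at most `2x³ / p` plus the number of its
`A`'s, and the latter sum to at most twice the number of nonzero integers `|A| ≤ x²`. Condition (M)
is sieved by Möbius inversion over the scalings `(d⁴A, d⁶B)`. Those with `p ∣ d` never have
multiplicative reduction, the others preserve it and replace `x` by `x / d²`; hence the main terms
add up to `∑ μ(d) / d¹⁰` over `p ∤ d`, and the errors to `O(x³ ∑ d⁻⁶)`. Only `O(x³)` pairs are
singular.
-/

open Finset ArithmeticFunction
open scoped ArithmeticFunction.Moebius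

section IntegerPoints

lemma abs_mul_sub_mul_le {R : Type*} [Ring R] [LinearOrder R] [IsOrderedRing R] (u v a b : R) :
    |u * v - a * b| ≤ |u| * |v - b| + |u - a| * |b| := by
  rw [← abs_mul, ← abs_mul, mul_sub, sub_mul, ← sub_add_sub_cancel (u * v) (u * b)]
  exact abs_add_le _ _

/-- The integers `n` with `|n| ≤ r`, viewed as the integer points of the real ball of radius `r`. -/
noncomputable def intBall (r : ℝ) : Finset ℤ := Icc ⌈-r⌉ ⌊r⌋

lemma mem_intBall {r : ℝ} {n : ℤ} : n ∈ intBall r ↔ |(n : ℝ)| ≤ r := by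
  rw [intBall, mem_Icc, Int.ceil_le, Int.le_floor, abs_le]

lemma card_intBall_erase_zero {r : ℝ} (hr : 0 ≤ r) : #((intBall r).erase 0) = 2 * ⌊r⌋₊ := by
  have hfloor : (⌊r⌋₊ : ℤ) = ⌊r⌋ := Int.natCast_floor_eq_floor hr
  rw [card_erase_of_mem (mem_intBall.mpr (by simpa using hr)), intBall, Int.card_Icc, Int.ceil_neg]
  lia

variable {n : ℕ}

/-- The integers of absolute value at most `r` in the residue class `v` modulo `n`. -/
noncomputable def intBallResidue (r : ℝ) (v : ZMod n) : Finset ℤ :=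
  {A ∈ intBall r | ((A : ℤ) : ZMod n) = v}

lemma mem_intBallResidue {r : ℝ} {v : ZMod n} {A : ℤ} :
    A ∈ intBallResidue r v ↔ |(A : ℝ)| ≤ r ∧ (A : ZMod n) = v := by
  rw [intBallResidue, mem_filter, mem_intBall]

lemma card_intBallResidue_intCast [NeZero n] (r : ℝ) (w : ℤ) :
    #(intBallResidue r (w : ZMod n)) = #(Icc ⌈(-r - w) / n⌉ ⌊(r - w) / n⌋) := by
  have hn : (0 : ℝ) < n := by exact_mod_cast NeZero.pos n
  symm
  apply card_bij fun k _ ↦ w + n * k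
  · intro k hk
    rw [mem_Icc, Int.ceil_le, Int.le_floor, div_le_iff₀ hn, le_div_iff₀ hn] at hk
    rw [mem_intBallResidue, abs_le]
    refine ⟨?_, by simp⟩
    push_cast
    constructor <;> linarith
  · intro k _ l _ hkl
    simpa [NeZero.ne n] using hkl
  · intro A hA
    rw [mem_intBallResidue, abs_le, eq_comm, ZMod.intCast_eq_intCast_iff_dvd_sub] at hA
    obtain ⟨⟨hlower, hupper⟩, k, hk⟩ := hA
    have hAk : (A : ℝ) - w = n * k := by exact_mod_cast hk
    refine ⟨k, ?_, by linarith⟩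
    rw [mem_Icc, Int.ceil_le, Int.le_floor, div_le_iff₀ hn, le_div_iff₀ hn]
    constructor <;> linarith

lemma abs_card_intBallResidue_sub_le [NeZero n] {r : ℝ} (hr : 0 ≤ r) (v : ZMod n) :
    |(#(intBallResidue r v) : ℝ) - 2 * r / n| ≤ 1 := by
  obtain ⟨w, rfl⟩ := ZMod.intCast_surjective v
  have hlength : (r - w) / n - (-r - w) / n = 2 * r / n := by ring
  have hlength_nonneg : 0 ≤ 2 * r / n := by positivity
  have hfloor := Int.lt_floor_add_one ((r - w) / n)
  have hfloor' := Int.floor_le ((r - w) / n)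
  have hceil := Int.ceil_lt_add_one ((-r - w) / n)
  have hceil' := Int.le_ceil ((-r - w) / n)
  have hle : ⌈(-r - w) / n⌉ ≤ ⌊(r - w) / n⌋ + 1 := by
    have : (⌈(-r - w) / n⌉ : ℝ) < ⌊(r - w) / n⌋ + 2 := by linarith
    have : ⌈(-r - w) / n⌉ < ⌊(r - w) / n⌋ + 2 := by exact_mod_cast this
    lia
  have hcard : (#(intBallResidue r (w : ZMod n)) : ℝ) =
      ⌊(r - w) / n⌋ + 1 - ⌈(-r - w) / n⌉ := by
    rw [card_intBallResidue_intCast]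
    exact_mod_cast Int.card_Icc_of_le _ _ hle
  rw [hcard, abs_le]
  constructor <;> linarith

lemma sum_card_intBallResidue_fst_le {a : ℝ} (ha : 0 ≤ a) {S : Finset (ZMod n × ZMod n)}
    (hS : ∀ s ∈ S, s.1 ≠ 0) {k : ℕ} (hk : ∀ α, #{s ∈ S | s.1 = α} ≤ k) :
    ∑ s ∈ S, #(intBallResidue a s.1) ≤ k * (2 * ⌊a⌋₊) := by
  calc
    ∑ s ∈ S, #(intBallResidue a s.1)
      = ∑ A ∈ intBall a, #{s ∈ S | (A : ZMod n) = s.1} :=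
        sum_card_bipartiteAbove_eq_sum_card_bipartiteBelow
          fun (s : ZMod n × ZMod n) (A : ℤ) ↦ (A : ZMod n) = s.1
    _ = ∑ A ∈ (intBall a).erase 0, #{s ∈ S | (A : ZMod n) = s.1} := by
        refine (sum_erase _ ?_).symm
        rw [card_eq_zero, filter_eq_empty_iff]
        exact fun s hs h ↦ hS s hs (by simpa using h.symm)
    _ ≤ ∑ _A ∈ (intBall a).erase 0, k :=
        sum_le_sum fun A _ ↦ by simpa only [eq_comm] using hk A
    _ = k * (2 * ⌊a⌋₊) := by
        rw [sum_const, card_intBall_erase_zero ha, smul_eq_mul, mul_comm]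

/-- The integer points of the box `[-a, a] × [-b, b]` whose reduction modulo `n` lies in `S`. -/
noncomputable def boxResidues (a b : ℝ) (S : Finset (ZMod n × ZMod n)) : Finset (ℤ × ℤ) :=
  {AB ∈ intBall a ×ˢ intBall b | ((AB.1 : ZMod n), (AB.2 : ZMod n)) ∈ S}

lemma card_boxResidues (a b : ℝ) (S : Finset (ZMod n × ZMod n)) :
    #(boxResidues a b S) = ∑ s ∈ S, #(intBallResidue a s.1) * #(intBallResidue b s.2) := by
  have hmaps : Set.MapsTo (fun AB : ℤ × ℤ ↦ ((AB.1 : ZMod n), (AB.2 : ZMod n)))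
      (boxResidues a b S) S := fun AB h ↦ (mem_filter.mp h).2
  rw [card_eq_sum_card_fiberwise hmaps]
  refine sum_congr rfl fun s hs ↦ ?_
  rw [boxResidues, ← card_product, intBallResidue, intBallResidue, ← filter_product, filter_filter]
  congr 1
  refine filter_congr fun AB _ ↦ ?_
  rw [← Prod.mk_inj]
  exact and_iff_right_of_imp fun h ↦ h ▸ hs

lemma abs_card_boxResidues_sub_le [NeZero n] {a b : ℝ} (ha : 0 ≤ a) (hb : 0 ≤ b)
    {S : Finset (ZMod n × ZMod n)} (hS : ∀ s ∈ S, s.1 ≠ 0) {k : ℕ}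
    (hk : ∀ α, #{s ∈ S | s.1 = α} ≤ k) :
    |(#(boxResidues a b S) : ℝ) - #S * ((2 * a / n) * (2 * b / n))| ≤
      k * (2 * ⌊a⌋₊) + #S * (2 * b / n) := by
  have hterm (s : ZMod n × ZMod n) :
      |(#(intBallResidue a s.1) * #(intBallResidue b s.2) : ℝ) - (2 * a / n) * (2 * b / n)| ≤
        #(intBallResidue a s.1) + 2 * b / n := by
    refine (abs_mul_sub_mul_le _ _ _ _).trans ?_
    rw [Nat.abs_cast, abs_of_nonneg (by positivity : 0 ≤ 2 * b / n)]
    exact add_le_add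
      (mul_le_of_le_one_right (by positivity) (abs_card_intBallResidue_sub_le hb s.2))
      (mul_le_of_le_one_left (by positivity) (abs_card_intBallResidue_sub_le ha s.1))
  calc
    |(#(boxResidues a b S) : ℝ) - #S * ((2 * a / n) * (2 * b / n))|
      = |∑ s ∈ S, ((#(intBallResidue a s.1) * #(intBallResidue b s.2) : ℝ) -
          (2 * a / n) * (2 * b / n))| := by
        rw [card_boxResidues, sum_sub_distrib, sum_const, nsmul_eq_mul]
        push_cast
        rfl
    _ ≤ ∑ s ∈ S, (#(intBallResidue a s.1) + 2 * b / n) :=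
        (abs_sum_le_sum_abs _ _).trans (sum_le_sum fun s _ ↦ hterm s)
    _ ≤ k * (2 * ⌊a⌋₊) + #S * (2 * b / n) := by
        rw [sum_add_distrib, sum_const, nsmul_eq_mul]
        gcongr
        exact_mod_cast sum_card_intBallResidue_fst_le ha hS hk

end IntegerPoints

section NodalLocus

variable (F : Type*) [Field F] [Fintype F] [DecidableEq F]

/-- The pairs `(α, β)` for which the reduced Weierstrass cubic `y² = x³ + αx + β` has a node:
its discriminant vanishes and `α ≠ 0`, which excludes the cusp. This description of the nodal cubics
is the intended one only in characteristic at least `5`. -/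
def nodalLocus : Finset (F × F) := {s | 4 * s.1 ^ 3 + 27 * s.2 ^ 2 = 0 ∧ s.1 ≠ 0}

variable {F}

lemma mem_nodalLocus {s : F × F} : s ∈ nodalLocus F ↔ 4 * s.1 ^ 3 + 27 * s.2 ^ 2 = 0 ∧ s.1 ≠ 0 := by
  simp [nodalLocus]

lemma card_nodalLocus (h3 : (3 : F) ≠ 0) : #(nodalLocus F) = Fintype.card F - 1 := by
  have hcard : #((univ : Finset F).erase 0) = Fintype.card F - 1 := by
    rw [card_erase_of_mem (mem_univ 0), card_univ]
  rw [← hcard]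
  symm
  by_cases h2 : (2 : F) = 0
  · have h4 : (4 : F) = 0 := by linear_combination 2 * h2
    have h27 : (27 : F) ≠ 0 := by
      rw [show (27 : F) = 3 ^ 3 by norm_num]
      exact pow_ne_zero 3 h3
    refine card_nbij' (fun t ↦ (t, 0)) Prod.fst ?_ ?_ ?_ ?_ <;>
      simp +contextual [Set.MapsTo, Set.LeftInvOn, mem_nodalLocus, h4, h27]
  · -- the double root of `x³ - 3t²x + 2t³ = (x - t)²(x + 2t)` parametrizes the locus
    refine card_nbij' (fun t ↦ (-3 * t ^ 2, 2 * t ^ 3)) (fun s ↦ -3 * s.2 / (2 * s.1)) ?_ ?_ ?_ ?_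
    · intro t ht
      have ht0 : t ≠ 0 := by simpa using ht
      exact mem_nodalLocus.mpr ⟨by ring, by simp [h3, ht0]⟩
    · rintro ⟨α, β⟩ hs
      obtain ⟨hdisc : 4 * α ^ 3 + 27 * β ^ 2 = 0, hα : α ≠ 0⟩ := mem_nodalLocus.mp hs
      have hβ : β ≠ 0 := by
        rintro rfl
        have : (2 : F) ^ 2 * α ^ 3 = 0 := by linear_combination hdisc
        simp_all
      simp_all
    · intro t ht
      have ht0 : t ≠ 0 := by simpa using ht
      field_simp
    · rintro ⟨α, β⟩ hs
      obtain ⟨hdisc : 4 * α ^ 3 + 27 * β ^ 2 = 0, hα : α ≠ 0⟩ := mem_nodalLocus.mp hs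
      rw [Prod.mk.injEq]
      constructor
      · field_simp
        linear_combination -hdisc
      · field_simp
        linear_combination -β * hdisc

lemma card_nodalLocus_fst_eq_le_two (h3 : (3 : F) ≠ 0) (α : F) :
    #{s ∈ nodalLocus F | s.1 = α} ≤ 2 := by
  rcases ({s ∈ nodalLocus F | s.1 = α}).eq_empty_or_nonempty with hempty | ⟨⟨α₀, β₀⟩, hs₀⟩
  · simp [hempty]
  obtain ⟨h₀, rfl : α₀ = α⟩ := mem_filter.mp hs₀
  refine (card_le_card (t := {(α₀, β₀), (α₀, -β₀)}) ?_).trans card_le_two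
  rintro ⟨α, β⟩ hs
  obtain ⟨h, rfl : α = α₀⟩ := mem_filter.mp hs
  have hcube : (3 : F) ^ 3 * (β ^ 2 - β₀ ^ 2) = 0 := by
    linear_combination (mem_nodalLocus.mp h).1 - (mem_nodalLocus.mp h₀).1
  have hsq : β ^ 2 = β₀ ^ 2 :=
    sub_eq_zero.mp ((mul_eq_zero.mp hcube).resolve_left (pow_ne_zero 3 h3))
  rcases sq_eq_sq_iff_eq_or_eq_neg.mp hsq with rfl | rfl <;> simp

end NodalLocus

section Moebius

/-- The largest `d` with `d⁴ ∣ A` and `d⁶ ∣ B`, that is, the largest `d` such that `(A, B)` is the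
rescaling by `d` of an integral Weierstrass equation; it is `0` at `(0, 0)`. -/
def scaleDivisor (A B : ℤ) : ℕ := (Nat.floorRoot 4 A.natAbs).gcd (Nat.floorRoot 6 B.natAbs)

lemma dvd_scaleDivisor {d : ℕ} {A B : ℤ} :
    d ∣ scaleDivisor A B ↔ (d : ℤ) ^ 4 ∣ A ∧ (d : ℤ) ^ 6 ∣ B := by
  rw [scaleDivisor, Nat.dvd_gcd_iff, ← Nat.pow_dvd_iff_dvd_floorRoot,
    ← Nat.pow_dvd_iff_dvd_floorRoot, ← Int.natCast_dvd, ← Int.natCast_dvd, Nat.cast_pow,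
    Nat.cast_pow]

lemma scaleDivisor_ne_zero {A : ℤ} (hA : A ≠ 0) (B : ℤ) : scaleDivisor A B ≠ 0 := by
  simp [scaleDivisor, hA]

lemma condM_iff_scaleDivisor_eq_one {A B : ℤ} : CondM A B ↔ scaleDivisor A B = 1 := by
  rw [Nat.eq_one_iff_not_exists_prime_dvd]
  simp only [CondM, dvd_scaleDivisor, not_and]

instance (A B : ℤ) : Decidable (CondM A B) := decidable_of_iff' _ condM_iff_scaleDivisor_eq_one

lemma hasSum_moebius_of_dvd {D : ℕ} (hD : D ≠ 0) :
    HasSum (fun d : ℕ ↦ if d ∣ D then (μ d : ℝ) else 0) (if D = 1 then 1 else 0) := by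
  have hsum : ∑ d ∈ D.divisors, (if d ∣ D then (μ d : ℝ) else 0) = if D = 1 then 1 else 0 := by
    rw [sum_congr rfl fun d hd ↦ if_pos (Nat.dvd_of_mem_divisors hd)]
    have hmoebius : ∑ d ∈ D.divisors, μ d = if D = 1 then 1 else 0 := by
      rw [← coe_mul_zeta_apply, moebius_mul_coe_zeta, one_apply]
    exact_mod_cast congrArg (Int.cast : ℤ → ℝ) hmoebius
  rw [← hsum]
  refine hasSum_sum_of_ne_finset_zero fun d hd ↦ if_neg ?_
  simpa [hD] using hd

lemma hasSum_moebius_mul_card_condM {T : Finset (ℤ × ℤ)} (hT : ∀ AB ∈ T, AB.1 ≠ 0) :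
    HasSum (fun d : ℕ ↦ μ d * (#{AB ∈ T | d ∣ scaleDivisor AB.1 AB.2} : ℝ))
      #{AB ∈ T | CondM AB.1 AB.2} := by
  have hsum := hasSum_sum fun AB hAB ↦
    hasSum_moebius_of_dvd (scaleDivisor_ne_zero (hT AB hAB) AB.2)
  simp only [← condM_iff_scaleDivisor_eq_one, sum_boole] at hsum
  convert hsum using 2 with d
  rw [← sum_filter, sum_const, nsmul_eq_mul, mul_comm]

/-- The Möbius function restricted to the integers coprime to `N`, and `0` elsewhere. -/
def coprimeMoebius (N d : ℕ) : ℤ := if d.Coprime N then μ d else 0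

lemma abs_coprimeMoebius_le_one (N d : ℕ) : |coprimeMoebius N d| ≤ 1 := by
  rw [coprimeMoebius]
  split_ifs
  · exact abs_moebius_le_one
  · simp

lemma prod_mul_riemannZeta_mul_LSeries_coprimeMoebius {N : ℕ} [NeZero N] {s : ℂ} (hs : 1 < s.re) :
    (∏ q ∈ N.primeFactors, (1 - (q : ℂ) ^ (-s))) * riemannZeta s *
      LSeries (fun d ↦ (coprimeMoebius N d : ℂ)) s = 1 := by
  have hs1 : s ≠ 1 := by
    rintro rfl
    simp at hs
  have hcoeff : (fun d : ℕ ↦ (coprimeMoebius N d : ℂ)) =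
      (fun d : ℕ ↦ (1 : DirichletCharacter ℂ N) d) * fun d ↦ ((μ d : ℤ) : ℂ) := by
    ext d
    by_cases hd : d.Coprime N
    · simp [coprimeMoebius, hd, MulChar.one_apply ((ZMod.isUnit_iff_coprime d N).mpr hd)]
    · simp [coprimeMoebius, hd, MulChar.map_nonunit _ (mt (ZMod.isUnit_iff_coprime d N).mp hd)]
  rw [← DirichletCharacter.LFunctionTrivChar_eq_mul_riemannZeta hs1,
    DirichletCharacter.LFunctionTrivChar, DirichletCharacter.LFunction_eq_LSeries _ hs, hcoeff]
  exact DirichletCharacter.LSeries.mul_mu_eq_one 1 hs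

lemma summable_coprimeMoebius_div_pow (N : ℕ) {k : ℕ} (hk : 1 < k) :
    Summable fun d : ℕ ↦ (coprimeMoebius N d : ℝ) / (d : ℝ) ^ k := by
  refine .of_norm_bounded (Real.summable_nat_pow_inv.mpr hk) fun d ↦ ?_
  rw [norm_div, Real.norm_eq_abs, Real.norm_of_nonneg (pow_nonneg d.cast_nonneg k), ← one_div]
  gcongr
  exact_mod_cast abs_coprimeMoebius_le_one N d

lemma tsum_coprimeMoebius_div_pow {N : ℕ} [NeZero N] {k : ℕ} (hk : 1 < k) :
    ∑' d : ℕ, (coprimeMoebius N d : ℝ) / (d : ℝ) ^ k =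
      ((∏ q ∈ N.primeFactors, (1 - ((q : ℝ) ^ k)⁻¹)) * (riemannZeta k).re)⁻¹ := by
  have hLSeries : LSeries (fun d ↦ (coprimeMoebius N d : ℂ)) k =
      ((∑' d : ℕ, (coprimeMoebius N d : ℝ) / (d : ℝ) ^ k : ℝ) : ℂ) := by
    rw [LSeries, Complex.ofReal_tsum]
    congr! 2 with d
    rw [LSeries.term_of_ne_zero' (by simp; lia), Complex.cpow_natCast]
    push_cast
    rfl
  have heuler : ∏ q ∈ N.primeFactors, (1 - (q : ℂ) ^ (-(k : ℂ))) =
      ((∏ q ∈ N.primeFactors, (1 - ((q : ℝ) ^ k)⁻¹) : ℝ) : ℂ) := by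
    push_cast
    simp only [Complex.cpow_neg, Complex.cpow_natCast]
  have hmul := prod_mul_riemannZeta_mul_LSeries_coprimeMoebius (N := N) (s := k) (by simpa using hk)
  rw [hLSeries, heuler, mul_right_comm, ← Complex.ofReal_mul] at hmul
  have hre := congrArg Complex.re hmul
  rw [Complex.re_ofReal_mul, Complex.one_re, mul_right_comm] at hre
  exact eq_inv_of_mul_eq_one_right hre

lemma tsum_coprimeMoebius_prime_div_pow {p : ℕ} (hp : p.Prime) {k : ℕ} (hk : 1 < k) :
    ∑' d : ℕ, (coprimeMoebius p d : ℝ) / (d : ℝ) ^ k =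
      (p : ℝ) ^ k / ((p : ℝ) ^ k - 1) / (riemannZeta k).re := by
  have : NeZero p := ⟨hp.ne_zero⟩
  have hpk : (p : ℝ) ^ k ≠ 0 := pow_ne_zero k (by exact_mod_cast hp.ne_zero)
  rw [tsum_coprimeMoebius_div_pow hk, hp.primeFactors, prod_singleton, mul_inv, ← div_eq_mul_inv]
  congr 1
  rw [← inv_div, sub_div, div_self hpk, one_div]

end Moebius

section MultiplicativePairs

/-- The pairs `(A, B)` of height at most `x⁶` with multiplicative reduction at `p` (for `p ≥ 5`),
without requiring condition (M) or a nonzero discriminant. -/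
noncomputable def multPairs (p : ℕ) (x : ℝ) : Finset (ℤ × ℤ) :=
  {AB ∈ intBall (x ^ 2) ×ˢ intBall (x ^ 3) |
    (p : ℤ) ∣ 4 * AB.1 ^ 3 + 27 * AB.2 ^ 2 ∧ ¬ (p : ℤ) ∣ AB.1}

variable {p : ℕ} {x : ℝ} {A B : ℤ}

lemma mem_multPairs :
    (A, B) ∈ multPairs p x ↔ (|(A : ℝ)| ≤ x ^ 2 ∧ |(B : ℝ)| ≤ x ^ 3) ∧
      (p : ℤ) ∣ 4 * A ^ 3 + 27 * B ^ 2 ∧ ¬ (p : ℤ) ∣ A := by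
  rw [multPairs, mem_filter, mem_product, mem_intBall, mem_intBall]

lemma fst_ne_zero_of_mem_multPairs (h : (A, B) ∈ multPairs p x) : A ≠ 0 := by
  rintro rfl
  exact (mem_multPairs.mp h).2.2 (dvd_zero _)

lemma height_le_pow_six_iff (hx : 0 ≤ x) :
    ((max (|A| ^ 3) (B ^ 2) : ℤ) : ℝ) ≤ x ^ 6 ↔ |(A : ℝ)| ≤ x ^ 2 ∧ |(B : ℝ)| ≤ x ^ 3 := by
  have hA : |(A : ℝ)| ^ 3 ≤ x ^ 6 ↔ |(A : ℝ)| ≤ x ^ 2 := by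
    rw [show x ^ 6 = (x ^ 2) ^ 3 by ring]
    exact pow_le_pow_iff_left₀ (abs_nonneg _) (by positivity) (by norm_num)
  have hB : (B : ℝ) ^ 2 ≤ x ^ 6 ↔ |(B : ℝ)| ≤ x ^ 3 := by
    rw [show x ^ 6 = (x ^ 3) ^ 2 by ring, ← sq_abs]
    exact pow_le_pow_iff_left₀ (abs_nonneg _) (by positivity) (by norm_num)
  push_cast
  rw [max_le_iff, hA, hB]

lemma setOf_mem_Efam_eq_coe_filter_multPairs (p : ℕ) (hx : 0 ≤ x) :
    {AB ∈ Efam (x ^ 6) | (p : ℤ) ∣ (4 * AB.1 ^ 3 + 27 * AB.2 ^ 2) ∧ ¬ (p : ℤ) ∣ AB.1} =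
      ({AB ∈ {AB ∈ multPairs p x | CondM AB.1 AB.2} | 4 * AB.1 ^ 3 + 27 * AB.2 ^ 2 ≠ 0} :
        Finset (ℤ × ℤ)) := by
  ext ⟨A, B⟩
  simp only [Efam, Set.mem_ofPred_eq, coe_filter, mem_filter, mem_multPairs,
    height_le_pow_six_iff hx]
  tauto

lemma card_multPairs_discr_eq_zero_le (p : ℕ) (hx : 0 ≤ x) :
    #{AB ∈ multPairs p x | 4 * AB.1 ^ 3 + 27 * AB.2 ^ 2 = 0} ≤ 2 * ⌊x ^ 3⌋₊ := by
  rw [← card_intBall_erase_zero (pow_nonneg hx 3)]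
  apply card_le_card_of_injOn Prod.snd
  · rintro ⟨A, B⟩ h
    obtain ⟨hmem, hdiscr⟩ := mem_filter.mp h
    refine mem_erase.mpr ⟨?_, mem_intBall.mpr (mem_multPairs.mp hmem).1.2⟩
    rintro rfl
    exact fst_ne_zero_of_mem_multPairs hmem (by simpa using hdiscr)
  · rintro ⟨A, B⟩ h ⟨A', _⟩ h' rfl
    have hcube : A ^ 3 = A' ^ 3 := by linarith [(mem_filter.mp h).2, (mem_filter.mp h').2]
    rw [(Odd.strictMono_pow (by decide : Odd 3)).injective hcube]

lemma multPairs_eq_boxResidues [Fact p.Prime] (x : ℝ) :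
    multPairs p x = boxResidues (x ^ 2) (x ^ 3) (nodalLocus (ZMod p)) := by
  refine filter_congr fun AB _ ↦ ?_
  rw [mem_nodalLocus, ← ZMod.intCast_zmod_eq_zero_iff_dvd, ← ZMod.intCast_zmod_eq_zero_iff_dvd]
  push_cast
  rfl

lemma abs_card_multPairs_sub_le (hp : p.Prime) (h3 : p ≠ 3) (hx : 0 ≤ x) :
    |(#(multPairs p x) : ℝ) - 4 * ((p - 1) / p ^ 2) * x ^ 5| ≤ 6 * x ^ 3 := by
  have : Fact p.Prime := ⟨hp⟩
  have hp0 : (0 : ℝ) < p := by exact_mod_cast hp.pos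
  have h3' : (3 : ZMod p) ≠ 0 := by
    rw [← Nat.cast_ofNat, Ne, ZMod.natCast_eq_zero_iff,
      Nat.prime_dvd_prime_iff_eq hp Nat.prime_three]
    exact h3
  have hcard : (#(nodalLocus (ZMod p)) : ℝ) = p - 1 := by
    rw [card_nodalLocus h3', ZMod.card, Nat.cast_pred hp.pos]
  have hfloor : (⌊x ^ 2⌋₊ : ℝ) ≤ x ^ 3 := by
    rcases lt_or_ge x 1 with hlt | hge
    · rw [Nat.floor_eq_zero.mpr (pow_lt_one₀ hx hlt two_ne_zero)]
      simpa using pow_nonneg hx 3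
    · exact (Nat.floor_le (sq_nonneg x)).trans (pow_le_pow_right₀ hge (by norm_num))
  calc
    |(#(multPairs p x) : ℝ) - 4 * ((p - 1) / p ^ 2) * x ^ 5|
      = |(#(boxResidues (x ^ 2) (x ^ 3) (nodalLocus (ZMod p))) : ℝ) -
          #(nodalLocus (ZMod p)) * ((2 * x ^ 2 / p) * (2 * x ^ 3 / p))| := by
        rw [multPairs_eq_boxResidues, hcard]
        ring_nf
    _ ≤ (2 : ℕ) * (2 * ⌊x ^ 2⌋₊) + #(nodalLocus (ZMod p)) * (2 * x ^ 3 / p) :=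
        abs_card_boxResidues_sub_le (pow_nonneg hx 2) (pow_nonneg hx 3)
          (fun s hs ↦ (mem_nodalLocus.mp hs).2) (card_nodalLocus_fst_eq_le_two h3')
    _ ≤ (2 : ℕ) * (2 * x ^ 3) + p * (2 * x ^ 3 / p) := by
        have hle : (#(nodalLocus (ZMod p)) : ℝ) ≤ p := by linarith
        exact add_le_add (by gcongr) (mul_le_mul_of_nonneg_right hle (by positivity))
    _ = 6 * x ^ 3 := by
        field_simp
        push_cast
        ring

lemma scale_mem_multPairs_iff (hp : p.Prime) {d : ℕ} (hd : d.Coprime p) :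
    ((d : ℤ) ^ 4 * A, (d : ℤ) ^ 6 * B) ∈ multPairs p x ↔ (A, B) ∈ multPairs p (x / d ^ 2) := by
  have hd0 : (0 : ℝ) < d := by
    exact_mod_cast Nat.pos_of_ne_zero (by rintro rfl; exact hp.ne_one (by simpa using hd))
  have hcoprime : IsCoprime (p : ℤ) d := Nat.isCoprime_iff_coprime.mpr hd.symm
  have hdiscr : 4 * ((d : ℤ) ^ 4 * A) ^ 3 + 27 * ((d : ℤ) ^ 6 * B) ^ 2 =
      (d : ℤ) ^ 12 * (4 * A ^ 3 + 27 * B ^ 2) := by ring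
  have hbound (m : ℕ) (C : ℤ) :
      |(((d : ℤ) ^ (2 * m) * C : ℤ) : ℝ)| ≤ x ^ m ↔ |(C : ℝ)| ≤ (x / d ^ 2) ^ m := by
    rw [div_pow, ← pow_mul, le_div_iff₀' (by positivity)]
    push_cast
    rw [abs_mul, abs_of_pos (by positivity : (0 : ℝ) < d ^ (2 * m))]
  have hdvd (m : ℕ) (C : ℤ) : (p : ℤ) ∣ (d : ℤ) ^ m * C ↔ (p : ℤ) ∣ C :=
    ⟨hcoprime.pow_right.dvd_of_dvd_mul_left, fun h ↦ h.mul_left _⟩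
  rw [mem_multPairs, mem_multPairs, hdiscr, hdvd, hdvd, hbound 2 A, hbound 3 B]

lemma card_multPairs_dvd_scaleDivisor (hp : p.Prime) {d : ℕ} (hd : d.Coprime p) (x : ℝ) :
    #{AB ∈ multPairs p x | d ∣ scaleDivisor AB.1 AB.2} = #(multPairs p (x / d ^ 2)) := by
  have hd0 : d ≠ 0 := by
    rintro rfl
    exact hp.ne_one (by simpa using hd)
  symm
  apply card_bij fun AB _ ↦ ((d : ℤ) ^ 4 * AB.1, (d : ℤ) ^ 6 * AB.2)
  · intro AB hAB
    exact mem_filter.mpr ⟨(scale_mem_multPairs_iff hp hd).mpr hAB,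
      dvd_scaleDivisor.mpr ⟨dvd_mul_right _ _, dvd_mul_right _ _⟩⟩
  · rintro ⟨A, B⟩ _ ⟨A', B'⟩ _ h
    simpa [hd0] using h
  · rintro ⟨A, B⟩ h
    obtain ⟨hmem, hdvd⟩ := mem_filter.mp h
    obtain ⟨⟨A', rfl⟩, ⟨B', rfl⟩⟩ := dvd_scaleDivisor.mp hdvd
    exact ⟨(A', B'), (scale_mem_multPairs_iff hp hd).mp hmem, rfl⟩

lemma multPairs_dvd_scaleDivisor_eq_empty (hp : p.Prime) {d : ℕ} (hd : ¬ d.Coprime p) (x : ℝ) :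
    {AB ∈ multPairs p x | d ∣ scaleDivisor AB.1 AB.2} = ∅ := by
  refine filter_eq_empty_iff.mpr ?_
  rintro ⟨A, B⟩ h hdvd
  have hpd : (p : ℤ) ∣ d := by
    rw [Nat.coprime_comm, hp.coprime_iff_not_dvd, not_not] at hd
    exact_mod_cast hd
  exact (mem_multPairs.mp h).2.2
    ((dvd_pow hpd four_ne_zero).trans (dvd_scaleDivisor.mp hdvd).1)

lemma hasSum_coprimeMoebius_mul_card_multPairs (hp : p.Prime) (x : ℝ) :
    HasSum (fun d : ℕ ↦ coprimeMoebius p d * (#(multPairs p (x / d ^ 2)) : ℝ))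
      #{AB ∈ multPairs p x | CondM AB.1 AB.2} := by
  convert hasSum_moebius_mul_card_condM fun _ ↦ fst_ne_zero_of_mem_multPairs using 2 with d
  rw [coprimeMoebius]
  split_ifs with hd
  · rw [card_multPairs_dvd_scaleDivisor hp hd]
  · simp [multPairs_dvd_scaleDivisor_eq_empty hp hd]

lemma abs_card_multPairs_condM_sub_le (hp : p.Prime) (h3 : p ≠ 3) (hx : 0 ≤ x) :
    |(#{AB ∈ multPairs p x | CondM AB.1 AB.2} : ℝ) -
        ((p - 1) / p ^ 2) * (p ^ 10 / (p ^ 10 - 1)) * (4 / (riemannZeta 10).re) * x ^ 5| ≤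
      6 * (∑' d : ℕ, ((d : ℝ) ^ 6)⁻¹) * x ^ 3 := by
  have hmain := (summable_coprimeMoebius_div_pow p (k := 10) (by norm_num)).hasSum.mul_left
    (4 * ((p - 1) / p ^ 2) * x ^ 5)
  rw [tsum_coprimeMoebius_prime_div_pow hp (by norm_num), Nat.cast_ofNat] at hmain
  have herror := (Real.summable_nat_pow_inv.mpr (by norm_num : 1 < 6)).hasSum.mul_left (6 * x ^ 3)
  convert! ((hasSum_coprimeMoebius_mul_card_multPairs hp x).sub hmain).norm_le_of_bounded herror
    fun d ↦ ?_ using 1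
  · rw [Real.norm_eq_abs]
    ring_nf
  · ring
  calc
    ‖coprimeMoebius p d * (#(multPairs p (x / d ^ 2)) : ℝ) -
        4 * ((p - 1) / p ^ 2) * x ^ 5 * (coprimeMoebius p d / d ^ 10)‖
      = |(coprimeMoebius p d : ℝ)| *
          |(#(multPairs p (x / d ^ 2)) : ℝ) - 4 * ((p - 1) / p ^ 2) * (x / d ^ 2) ^ 5| := by
        rw [Real.norm_eq_abs, ← abs_mul, div_pow]
        ring_nf
    _ ≤ 1 * (6 * (x / d ^ 2) ^ 3) := by
        gcongr
        · exact_mod_cast abs_coprimeMoebius_le_one p d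
        · exact abs_card_multPairs_sub_le hp h3 (by positivity)
    _ = 6 * x ^ 3 * ((d : ℝ) ^ 6)⁻¹ := by
        rw [div_pow]
        ring

lemma abs_ncard_Efam_mult_sub_le (hp : p.Prime) (h3 : p ≠ 3) (hx : 0 ≤ x) :
    |({AB ∈ Efam (x ^ 6) |
          (p : ℤ) ∣ (4 * AB.1 ^ 3 + 27 * AB.2 ^ 2) ∧ ¬ (p : ℤ) ∣ AB.1}.ncard : ℝ) -
        ((p - 1) / p ^ 2) * (p ^ 10 / (p ^ 10 - 1)) * (4 / (riemannZeta 10).re) * x ^ 5| ≤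
      (6 * (∑' d : ℕ, ((d : ℝ) ^ 6)⁻¹) + 2) * x ^ 3 := by
  rw [setOf_mem_Efam_eq_coe_filter_multPairs p hx, Set.ncard_coe_finset]
  set T : Finset (ℤ × ℤ) := {AB ∈ multPairs p x | CondM AB.1 AB.2}
  have hsplit : (#{AB ∈ T | 4 * AB.1 ^ 3 + 27 * AB.2 ^ 2 = 0} : ℝ) +
      #{AB ∈ T | 4 * AB.1 ^ 3 + 27 * AB.2 ^ 2 ≠ 0} = #T := by
    exact_mod_cast card_filter_add_card_filter_not _
  have hsingular : (#{AB ∈ T | 4 * AB.1 ^ 3 + 27 * AB.2 ^ 2 = 0} : ℝ) ≤ 2 * x ^ 3 := by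
    have hle : #{AB ∈ T | 4 * AB.1 ^ 3 + 27 * AB.2 ^ 2 = 0} ≤ 2 * ⌊x ^ 3⌋₊ :=
      (card_le_card (filter_subset_filter _ (filter_subset _ _))).trans
        (card_multPairs_discr_eq_zero_le p hx)
    calc
      (#{AB ∈ T | 4 * AB.1 ^ 3 + 27 * AB.2 ^ 2 = 0} : ℝ) ≤ 2 * ⌊x ^ 3⌋₊ := by exact_mod_cast hle
      _ ≤ 2 * x ^ 3 := by
        gcongr
        exact Nat.floor_le (pow_nonneg hx 3)
  have hT := abs_le.mp (abs_card_multPairs_condM_sub_le hp h3 hx)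
  have hsingular_nonneg : (0 : ℝ) ≤ #{AB ∈ T | 4 * AB.1 ^ 3 + 27 * AB.2 ^ 2 = 0} :=
    Nat.cast_nonneg _
  rw [abs_le, add_mul]
  constructor <;> linarith [hT.1, hT.2, hsingular_nonneg]

end MultiplicativePairs

theorem stmt_14_general :
    ∃ K : ℝ, 0 < K ∧ ∀ (p : ℕ), p.Prime → p ≠ 3 → ∀ (X : ℝ), 0 ≤ X →
      |({AB ∈ Efam X | (p : ℤ) ∣ (4 * AB.1 ^ 3 + 27 * AB.2 ^ 2) ∧ ¬ (p : ℤ) ∣ AB.1}.ncard : ℝ)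
          - (((p : ℝ) - 1) / (p : ℝ) ^ 2) * ((p : ℝ) ^ 10 / ((p : ℝ) ^ 10 - 1))
            * (4 / (riemannZeta 10).re) * X ^ ((5 : ℝ) / 6)|
        ≤ K * X ^ ((1 : ℝ) / 2) := by
  have htsum : 0 ≤ ∑' d : ℕ, ((d : ℝ) ^ 6)⁻¹ := tsum_nonneg fun d ↦ by positivity
  refine ⟨6 * (∑' d : ℕ, ((d : ℝ) ^ 6)⁻¹) + 2, by linarith, fun p hp h3 X hX ↦ ?_⟩
  have hpow (k : ℕ) : X ^ ((k : ℝ) / 6) = (X ^ ((1 : ℝ) / 6)) ^ k := by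
    rw [← Real.rpow_mul_natCast hX]
    ring_nf
  have h6 : X = (X ^ ((1 : ℝ) / 6)) ^ 6 := by simpa using hpow 6
  have h5 : X ^ ((5 : ℝ) / 6) = (X ^ ((1 : ℝ) / 6)) ^ 5 := by simpa using hpow 5
  have h3' : X ^ ((1 : ℝ) / 2) = (X ^ ((1 : ℝ) / 6)) ^ 3 := by
    rw [← hpow 3]
    norm_num
  have hmain := abs_ncard_Efam_mult_sub_le hp h3 (Real.rpow_nonneg hX ((1 : ℝ) / 6))
  rwa [← h6, ← h5, ← h3'] at hmain

theorem stmt_14 :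
    ∃ K : ℝ, 0 < K ∧ ∀ (p : ℕ), p.Prime → 5 ≤ p → ∀ (X : ℝ), (p : ℝ) ^ 3 ≤ X →
      |({AB ∈ Efam X | (p : ℤ) ∣ (4 * AB.1 ^ 3 + 27 * AB.2 ^ 2) ∧ ¬ (p : ℤ) ∣ AB.1}.ncard : ℝ)
          - (((p : ℝ) - 1) / (p : ℝ) ^ 2) * ((p : ℝ) ^ 10 / ((p : ℝ) ^ 10 - 1))
            * (4 / (riemannZeta 10).re) * X ^ ((5 : ℝ) / 6)|
        ≤ K * X ^ ((1 : ℝ) / 2) := by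
  obtain ⟨K, hK, hbound⟩ := stmt_14_general
  exact ⟨K, hK, fun p hp h5 X hX ↦ hbound p hp (by lia) X (le_trans (by positivity) hX)⟩
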